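/- There exists an laVASS V of dimension 2 over the alphabet Σ₂ = {0,1}² such that L(V) is zero-closed and ⟦L(V)⟧ = {(x, y) ∈ ℕ² : x = 2^y}. Moreover, V can be taken to be a restricted laVASS with a single counter pair. -/

import Mathlib

/-- A labelled affine VASS: a finite set of control states `Q`, dimension `d`, alphabet `σ`,
a finite set of transitions `Δ ⊆ Q × σ × Q`, an update function assigning to each transition
and each counter an affine function `x ↦ a·x + b` (coded by the pair `(a, b)`), an initial
control state, a set of final control states and a set of final counter values. -/
structure LAVASS (σ : Type) (d : ℕ) where
  Q : Type
  fintypeQ : Fintype Q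
  Δ : Set (Q × σ × Q)
  finΔ : Δ.Finite
  upd : Q × σ × Q → Fin d → ℤ × ℤ
  init : Q
  F : Set Q
  Sf : Set (Fin d → ℕ)

namespace LAVASS

variable {σ : Type} {d : ℕ}

/-- Configurations: a control state together with `d` counter values in `ℕ`. -/
abbrev Config (V : LAVASS σ d) := V.Q × (Fin d → ℕ)

/-- The initial configuration `(q₀, 0, …, 0)`. -/
def initConfig (V : LAVASS σ d) : V.Config := (V.init, fun _ => 0)

/-- One step of the configuration graph, reading letter `a`: there is a transition
`(q, a, q') ∈ Δ` and every counter is updated by its affine function, the result being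
a natural number (non-negativity is built into the type). -/
def Step (V : LAVASS σ d) (c : V.Config) (a : σ) (c' : V.Config) : Prop :=
  (c.1, a, c'.1) ∈ V.Δ ∧
    ∀ i : Fin d,
      (c'.2 i : ℤ) = (V.upd (c.1, a, c'.1) i).1 * (c.2 i : ℤ) + (V.upd (c.1, a, c'.1) i).2

/-- Extension of the step relation to words. -/
def Reach (V : LAVASS σ d) : V.Config → List σ → V.Config → Prop
  | c, [], c' => c = c'
  | c, a :: w, c' => ∃ c₁, Step V c a c₁ ∧ Reach V c₁ w c'

/-- The language of `V`: words leading from the initial configuration to a final one. -/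
def Lang (V : LAVASS σ d) : Set (List σ) :=
  {w | ∃ c', Reach V V.initConfig w c' ∧ c'.1 ∈ V.F ∧ c'.2 ∈ V.Sf}

/-- A run from the initial configuration, as a list of successive configurations. -/
def IsRunFromInit (V : LAVASS σ d) (cs : List V.Config) : Prop :=
  cs.head? = some V.initConfig ∧ cs.Chain' (fun c c' => ∃ a, Step V c a c')

end LAVASS

/-- Index of the counter `x_i` in a counter pair `(x_i, y_i)`. -/
def xIdx {d : ℕ} (i : Fin d) : Fin (2 * d) := ⟨2 * i.1, by omega⟩

/-- Index of the counter `y_i` in a counter pair `(x_i, y_i)`. -/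
def yIdx {d : ℕ} (i : Fin d) : Fin (2 * d) := ⟨2 * i.1 + 1, by omega⟩

/-- A restricted laVASS: an laVASS of dimension `2d` whose counters form pairs `(x_i, y_i)`
such that (i) every update on `x_i` is the identity or the increment and every update on
`y_i` is `x ↦ 2x` or `x ↦ 2x+1`; (ii) along every run from the initial configuration, once
an increment is applied to `x_i`, every subsequent transition increments `x_i`; and
(iii) the final counter values are exactly those with `x_i = y_i` for all `i`. -/
def IsRestricted {σ : Type} (d : ℕ) (V : LAVASS σ (2 * d)) : Prop :=
  (∀ t ∈ V.Δ, ∀ i : Fin d,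
      (V.upd t (xIdx i) = (1, 0) ∨ V.upd t (xIdx i) = (1, 1)) ∧
      (V.upd t (yIdx i) = (2, 0) ∨ V.upd t (yIdx i) = (2, 1))) ∧
  (∀ cs : List V.Config, V.IsRunFromInit cs → ∀ i : Fin d,
      ∀ j : ℕ, ∀ hj : j + 1 < cs.length,
        (cs.get ⟨j + 1, hj⟩).2 (xIdx i) = (cs.get ⟨j, by omega⟩).2 (xIdx i) + 1 →
        ∀ j' : ℕ, j ≤ j' → ∀ hj' : j' + 1 < cs.length,
          (cs.get ⟨j' + 1, hj'⟩).2 (xIdx i) = (cs.get ⟨j', by omega⟩).2 (xIdx i) + 1) ∧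
  V.Sf = {v | ∀ i : Fin d, v (xIdx i) = v (yIdx i)}

/-- `⟦w⟧ ∈ ℕ^k`: the tuple denoted by a word over `{0,1}^k` in msd-first notation. -/
def wordVal {k : ℕ} (w : List (Fin k → Bool)) : Fin k → ℕ :=
  w.foldl (fun acc u j => 2 * acc j + (u j).toNat) fun _ => 0

/-- A language over `{0,1}^k` is zero-closed if `L = 0⃗^* · L`. -/
def ZeroClosed {k : ℕ} (L : Set (List (Fin k → Bool))) : Prop :=
  L = {w | ∃ (p : ℕ) (u : List (Fin k → Bool)),
        u ∈ L ∧ w = List.replicate p (fun _ => false) ++ u}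

/-- `‖A‖_{1,∞}`: the maximum over the rows of the sum of absolute values of the entries. -/
def matNorm {m n : ℕ} (A : Matrix (Fin m) (Fin n) ℤ) : ℕ :=
  Finset.univ.sup fun i => ∑ j, (A i j).natAbs

/-- `‖b‖_∞`: the maximum absolute value of the entries. -/
def vecNorm {m : ℕ} (b : Fin m → ℤ) : ℕ :=
  Finset.univ.sup fun i => (b i).natAbs

/-!
Reading `(x, y)` most significant digit first, `x` is a power of two iff its digits are
`0⋯010⋯0`, and the exponent is then the number of digits after the `1`. The counter `x₀` counts
these digits from the `1` on, while `y₀ ↦ 2 * y₀ + digit` evaluates `y`, so the acceptance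
condition `x₀ = y₀` says `x = 2 ^ y`. The language is thus the full preimage under `wordVal` of
the graph of `2 ^ ·`, whence it is zero-closed, and its image is that graph because `wordVal` is
surjective.
-/

section Words

variable {k : ℕ}

theorem wordVal_append_singleton (w : List (Fin k → Bool)) (u : Fin k → Bool) :
    wordVal (w ++ [u]) = fun j => 2 * wordVal w j + (u j).toNat := by
  simp only [wordVal, List.foldl_append, List.foldl_cons, List.foldl_nil]

theorem wordVal_replicate_false_append (p : ℕ) (w : List (Fin k → Bool)) :
    wordVal (List.replicate p (fun _ => false) ++ w) = wordVal w := by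
  induction p with
  | zero => rfl
  | succ _ ih => exact ih

theorem exists_wordVal_eq_of_lt_two_pow {n : ℕ} {v : Fin k → ℕ} (hv : ∀ j, v j < 2 ^ n) :
    ∃ w, wordVal w = v := by
  induction n generalizing v with
  | zero => exact ⟨[], funext fun j => (Nat.lt_one_iff.mp (hv j)).symm⟩
  | succ n ih =>
    have hhalf (j : Fin k) : (v j).div2 < 2 ^ n := by
      have := hv j
      rw [Nat.div2_val]
      lia
    obtain ⟨w, hw⟩ := ih hhalf
    refine ⟨w ++ [fun j => (v j).bodd], ?_⟩
    rw [wordVal_append_singleton, hw]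
    exact funext fun j => (Nat.bit_val _ _).symm.trans (Nat.bit_bodd_div2 (v j))

theorem wordVal_surjective : Function.Surjective (wordVal (k := k)) := fun v =>
  exists_wordVal_eq_of_lt_two_pow fun j =>
    (Finset.single_le_sum_of_canonicallyOrdered (Finset.mem_univ j)).trans_lt
      (Nat.lt_two_pow_self (n := ∑ i, v i))

theorem zeroClosed_preimage_wordVal (S : Set (Fin k → ℕ)) : ZeroClosed (wordVal ⁻¹' S) := by
  ext w
  constructor
  · exact fun hw => ⟨0, w, hw, rfl⟩
  · rintro ⟨p, u, hu, rfl⟩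
    rwa [Set.mem_preimage, wordVal_replicate_false_append]

end Words

theorem isChain_getElem_propagate {α : Type*} {R T : α → α → Prop} {l : List α}
    (hl : l.IsChain R) (hT : ∀ {a b c}, R a b → R b c → T a b → T b c)
    {i j : ℕ} (hij : i ≤ j) (hj : j + 1 < l.length) (hi : T l[i] l[i + 1]) :
    T l[j] l[j + 1] := by
  rw [List.isChain_iff_getElem] at hl
  induction j, hij using Nat.le_induction with
  | base => exact hi
  | succ j _ ih => exact hT (hl j _) (hl (j + 1) hj) (ih (by lia) hi)

theorem LAVASS.reach_append_singleton {σ : Type} {d : ℕ} (V : LAVASS σ d) {c c' : V.Config}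
    {w : List σ} {a : σ} :
    V.Reach c (w ++ [a]) c' ↔ ∃ c₁, V.Reach c w c₁ ∧ V.Step c₁ a c' := by
  induction w generalizing c with
  | nil => simp [LAVASS.Reach]
  | cons b w ih =>
    simp only [List.cons_append, LAVASS.Reach, ih]
    tauto

/-- The restricted laVASS for `x = 2 ^ y`. Its control state records whether the leading `1` of
`x` has been read; counter `0` counts the digits read since, and counter `1` evaluates `y`. -/
def powTwoLAVASS : LAVASS (Fin 2 → Bool) (2 * 1) where
  Q := Bool
  fintypeQ := inferInstance
  Δ := {t | (t.1 && t.2.1 0) = false ∧ t.2.2 = (t.1 || t.2.1 0)}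
  finΔ := Set.toFinite _
  upd := fun t => ![(1, t.1.toNat), (2, (t.2.1 1).toNat)]
  init := false
  F := {true}
  Sf := {v | ∀ i : Fin 1, v (xIdx i) = v (yIdx i)}

namespace powTwoLAVASS

theorem step_iff {c c' : powTwoLAVASS.Config} {a : Fin 2 → Bool} :
    powTwoLAVASS.Step c a c' ↔ ((c.1 && a 0) = false ∧ c'.1 = (c.1 || a 0)) ∧
      c'.2 0 = c.2 0 + c.1.toNat ∧ c'.2 1 = 2 * c.2 1 + (a 1).toNat := by
  refine and_congr Iff.rfl (Fin.forall_fin_two.trans (and_congr ?_ ?_))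
  · change (c'.2 0 : ℤ) = 1 * c.2 0 + c.1.toNat ↔ _
    lia
  · change (c'.2 1 : ℤ) = 2 * c.2 1 + (a 1).toNat ↔ _
    lia

theorem isRestricted : IsRestricted 1 powTwoLAVASS := by
  refine ⟨fun ⟨q, a, _⟩ _ i => ?_, fun cs hcs i j _ hinc j' hjj' hj' => ?_, rfl⟩
  · obtain rfl := Subsingleton.elim i 0
    change ((1, (q.toNat : ℤ)) = (1, 0) ∨ (1, (q.toNat : ℤ)) = (1, 1)) ∧
      ((2, ((a 1).toNat : ℤ)) = (2, 0) ∨ (2, ((a 1).toNat : ℤ)) = (2, 1))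
    cases q <;> cases a 1 <;> simp
  · obtain rfl := Subsingleton.elim i 0
    refine isChain_getElem_propagate (T := fun c c' => c'.2 0 = c.2 0 + 1) hcs.2 ?_ hjj' hj' hinc
    rintro c c' c'' ⟨a, hstep⟩ ⟨b, hstep'⟩ (hc : c'.2 0 = c.2 0 + 1)
    obtain ⟨⟨-, hstate⟩, hcount, -⟩ := step_iff.mp hstep
    have hseen : c.1 = true := Bool.toNat_eq_one.mp (by lia)
    rw [hseen, Bool.true_or] at hstate
    change c''.2 0 = c'.2 0 + 1
    rw [(step_iff.mp hstep').2.1, hstate, Bool.toNat_true]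

/-- The invariant that characterizes the configuration `c` reached by reading digits of value `v`.
The factor `c.1.toNat` makes the first component `0` before the leading `1`, and a power of two
afterwards. -/
def Records (c : powTwoLAVASS.Config) (v : Fin 2 → ℕ) : Prop :=
  v 0 = c.1.toNat * 2 ^ c.2 0 ∧ (c.1 = false → c.2 0 = 0) ∧ v 1 = c.2 1

theorem records_zero_iff {c : powTwoLAVASS.Config} :
    Records c (fun _ => 0) ↔ powTwoLAVASS.initConfig = c := by
  constructor
  · rintro ⟨hx, hzero, hy⟩
    have hstate : c.1 = false :=
      Bool.toNat_eq_zero.mp (eq_zero_of_ne_zero_of_mul_right_eq_zero (by positivity) hx.symm)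
    exact Prod.ext hstate.symm (funext (Fin.forall_fin_two.mpr ⟨(hzero hstate).symm, hy⟩))
  · rintro rfl
    exact ⟨(Nat.zero_mul _).symm, fun _ => rfl, rfl⟩

theorem Records.step {c c' : powTwoLAVASS.Config} {v : Fin 2 → ℕ} {a : Fin 2 → Bool}
    (hc : Records c v) (hstep : powTwoLAVASS.Step c a c') :
    Records c' fun j => 2 * v j + (a j).toNat := by
  obtain ⟨hx, hzero, hy⟩ := hc
  obtain ⟨⟨hdigit, hstate⟩, hcount, heval⟩ := step_iff.mp hstep
  simp only [Records, hx, hy, hstate, hcount, heval, and_true]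
  cases hq : c.1 with
  | false => simp [hzero hq]
  | true =>
    have ha : a 0 = false := by rwa [hq, Bool.true_and] at hdigit
    simp [ha, pow_succ']

theorem Records.exists_step {c' : powTwoLAVASS.Config} {v : Fin 2 → ℕ} {a : Fin 2 → Bool}
    (hc' : Records c' fun j => 2 * v j + (a j).toNat) :
    ∃ c, Records c v ∧ powTwoLAVASS.Step c a c' := by
  obtain ⟨hx, hzero, hy⟩ := hc'
  dsimp only at hx hy
  have ha_le := Bool.toNat_le (a 0)
  rcases hcount : c'.2 0 with _ | n
  · rw [hcount, pow_zero, mul_one] at hx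
    have hq_le := Bool.toNat_le c'.1
    have hstate : a 0 = c'.1 := Function.LeftInverse.injective Bool.ofNat_toNat (by lia)
    have hv : v 0 = 0 := by lia
    exact ⟨(false, ![0, v 1]), ⟨by simpa using hv, fun _ => rfl, rfl⟩,
      step_iff.mpr ⟨⟨rfl, hstate.symm⟩, hcount, hy.symm⟩⟩
  · have hstate : c'.1 = true := by
      by_contra hq
      have := hzero (Bool.eq_false_of_not_eq_true hq)
      lia
    rw [hcount, hstate, Bool.toNat_true, one_mul, pow_succ] at hx
    have ha : a 0 = false := Bool.toNat_eq_zero.mp (by lia)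
    have hv : v 0 = 2 ^ n := by lia
    exact ⟨(true, ![n, v 1]), ⟨by simpa using hv, nofun, rfl⟩,
      step_iff.mpr ⟨⟨ha, hstate⟩, hcount, hy.symm⟩⟩

theorem reach_iff {w : List (Fin 2 → Bool)} {c : powTwoLAVASS.Config} :
    powTwoLAVASS.Reach powTwoLAVASS.initConfig w c ↔ Records c (wordVal w) := by
  induction w using List.reverseRecOn generalizing c with
  | nil => exact records_zero_iff.symm
  | append_singleton w a ih =>
    simp only [LAVASS.reach_append_singleton, ih, wordVal_append_singleton]
    exact ⟨fun ⟨_, hc, hstep⟩ => hc.step hstep, Records.exists_step⟩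

theorem lang_eq : powTwoLAVASS.Lang = wordVal ⁻¹' {v | v 0 = 2 ^ v 1} := by
  ext w
  constructor
  · rintro ⟨c, hreach, hstate : c.1 = true, hfinal⟩
    obtain ⟨hx, -, hy⟩ := reach_iff.mp hreach
    have hcounters : c.2 0 = c.2 1 := hfinal 0
    change wordVal w 0 = 2 ^ wordVal w 1
    rw [hx, hy, hstate, hcounters, Bool.toNat_true, one_mul]
  · intro (hw : wordVal w 0 = 2 ^ wordVal w 1)
    refine ⟨(true, fun _ => wordVal w 1), reach_iff.mpr ⟨?_, nofun, rfl⟩, rfl, fun _ => rfl⟩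
    rw [hw, Bool.toNat_true, one_mul]

end powTwoLAVASS

/-- There is a restricted laVASS `V` with a single counter pair (dimension `2·1`) over the
alphabet `{0,1}²` such that `L(V)` is zero-closed and `⟦L(V)⟧ = {(x, y) ∈ ℕ² : x = 2^y}`. -/
theorem exponential_equation_lavass :
    ∃ V : LAVASS (Fin 2 → Bool) (2 * 1),
      IsRestricted 1 V ∧
      ZeroClosed V.Lang ∧
      wordVal '' V.Lang = {v : Fin 2 → ℕ | v 0 = 2 ^ v 1} := by
  refine ⟨powTwoLAVASS, powTwoLAVASS.isRestricted, ?_, ?_⟩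
  · rw [powTwoLAVASS.lang_eq]
    exact zeroClosed_preimage_wordVal _
  · rw [powTwoLAVASS.lang_eq]
    exact Set.image_preimage_eq _ wordVal_surjective
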